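/- Let t > 0 and s, d ∈ ℝ, and set x := s − d, a := s + d. Assume p(t,x) < a < −|x| (this forces |x| < t). Then Δ := t² + x² + 2ta > 0 and z⋆ := (t − s + d − √Δ)/t = (t − x − √Δ)/t lies in the open interval (0, 2). Moreover, defining Φ(θ) := −s·Log(z⋆e^{iθ}) + d·Log(2 − z⋆e^{iθ}) + (t/2)(1 − z⋆e^{iθ}) for θ ∈ (−π, π), where Log is the principal complex logarithm: Φ′(0) = 0; Φ″(0) is a strictly positive real number; and the function θ ↦ Re Φ(θ) extends continuously to [−π, π], is an even function of θ, and is strictly increasing on [0, π]. -/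

import Mathlib

open Real

/-- The (shifted) parabola `p(t,x)`: for `t > 0`, `p(t,x) = -t/2 - x²/(2t)` when `|x| ≤ t`
and `p(t,x) = -|x|` otherwise; also `p(0,x) = -|x|`. -/
noncomputable def parab (t x : ℝ) : ℝ :=
  if 0 < t ∧ |x| ≤ t then -t / 2 - x ^ 2 / (2 * t) else -|x|

/-!
Write `r = √Δ`. The equation defining `z⋆` can be solved for the parameters:
`4s = -z⋆(tz⋆ + 2r)` and `4d = (2 - z⋆)(2r - t(2 - z⋆))`. Substituting these gives `Φ′(0) = 0` and
`Φ″(0) = z⋆r / (2 - z⋆)`. On the circle of radius `z⋆`, `Re Φ` depends only on the distance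
`ρ = |2 - z⋆e^{iθ}|`, being `d log ρ + tρ²/8` up to a constant. This is increasing in `ρ` as soon as
`4d + tρ² > 0`, which holds because `ρ ≥ 2 - z⋆` and `4d + t(2 - z⋆)² = 2r(2 - z⋆)`.
-/

open Set Topology

theorem deriv_deriv_comp_circleMap {f f' : ℂ → ℂ} {f'' c : ℂ} {R θ : ℝ}
    (hf : ∀ᶠ w in 𝓝 (circleMap c R θ), HasDerivAt f (f' w) w)
    (hf' : HasDerivAt f' f'' (circleMap c R θ)) :
    deriv (deriv fun φ => f (circleMap c R φ)) θ =
      -(circleMap 0 R θ ^ 2 * f'' + circleMap 0 R θ * f' (circleMap c R θ)) := by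
  have first : deriv (fun φ => f (circleMap c R φ)) =ᶠ[𝓝 θ]
      fun φ => f' (circleMap c R φ) * (circleMap 0 R φ * Complex.I) :=
    ((continuous_circleMap c R).continuousAt.eventually hf).mono fun φ hφ =>
      (hφ.comp φ (hasDerivAt_circleMap c R φ)).deriv
  have second := (hf'.comp θ (hasDerivAt_circleMap c R θ)).mul
    ((hasDerivAt_circleMap 0 R θ).mul_const Complex.I)
  rw [first.deriv_eq]
  refine second.deriv.trans ?_
  simp only [Function.comp_apply]
  linear_combination (circleMap 0 R θ ^ 2 * f'' + circleMap 0 R θ * f' (circleMap c R θ)) *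
    Complex.I_sq

theorem norm_ofReal_sub_circleMap_sq (c R θ : ℝ) :
    ‖(c : ℂ) - circleMap 0 R θ‖ ^ 2 = c ^ 2 + R ^ 2 - 2 * c * R * cos θ := by
  rw [Complex.sq_norm, Complex.normSq_sub, Complex.normSq_ofReal,
    ← Complex.sq_norm (circleMap 0 R θ), norm_circleMap_zero, sq_abs, Complex.re_ofReal_mul,
    Complex.conj_re, circleMap_zero, Complex.re_ofReal_mul, Complex.exp_ofReal_mul_I_re]
  ring

theorem norm_ofReal_sub_circleMap_neg (c R θ : ℝ) :
    ‖(c : ℂ) - circleMap 0 R (-θ)‖ = ‖(c : ℂ) - circleMap 0 R θ‖ := by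
  rw [← sq_eq_sq₀ (norm_nonneg _) (norm_nonneg _), norm_ofReal_sub_circleMap_sq,
    norm_ofReal_sub_circleMap_sq, cos_neg]

theorem strictMonoOn_norm_ofReal_sub_circleMap {c R : ℝ} (h : 0 < c * R) :
    StrictMonoOn (fun θ => ‖(c : ℂ) - circleMap 0 R θ‖) (Icc 0 π) := by
  intro α hα β hβ hαβ
  refine lt_of_pow_lt_pow_left₀ 2 (norm_nonneg _) ?_
  rw [norm_ofReal_sub_circleMap_sq, norm_ofReal_sub_circleMap_sq]
  linarith [mul_lt_mul_of_pos_left (strictAntiOn_cos hα hβ hαβ) h]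

theorem sub_abs_le_norm_sub_circleMap (c : ℂ) (R θ : ℝ) :
    ‖c‖ - |R| ≤ ‖c - circleMap 0 R θ‖ := by
  simpa only [norm_circleMap_zero] using norm_sub_norm_le c (circleMap 0 R θ)

theorem strictMonoOn_mul_log_add_mul_sq {c k y₀ : ℝ} (hk : 0 ≤ k) (hy₀ : 0 < y₀)
    (h : 0 < c + 2 * k * y₀ ^ 2) :
    StrictMonoOn (fun y => c * log y + k * y ^ 2) (Ici y₀) := by
  have hderiv (y : ℝ) (hy : y ∈ Ici y₀) :
      HasDerivAt (fun y => c * log y + k * y ^ 2) (c * y⁻¹ + k * (2 * y)) y := by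
    exact (((hasDerivAt_log (hy₀.trans_le hy).ne').const_mul c).add
      ((hasDerivAt_pow 2 y).const_mul k)).congr_deriv (by norm_num)
  refine strictMonoOn_of_deriv_pos (convex_Ici y₀)
    (fun y hy => (hderiv y hy).continuousAt.continuousWithinAt) fun y hy => ?_
  have hy : y₀ ≤ y := interior_subset hy
  have hy_pos : 0 < y := hy₀.trans_le hy
  have numerator_pos : 0 < c + 2 * k * y ^ 2 := h.trans_le (by gcongr)
  rw [(hderiv y hy).deriv, show c * y⁻¹ + k * (2 * y) = (c + 2 * k * y ^ 2) / y by field_simp]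
  exact div_pos numerator_pos hy_pos

/-- The exponent `Φ^▷(w; t, s, d)` as a function of the complex variable `w`, with principal
logarithms. -/
noncomputable def rightExponent (t s d : ℝ) (w : ℂ) : ℂ :=
  -(s * Complex.log w) + d * Complex.log (2 - w) + (t / 2 : ℂ) * (1 - w)

/-- The discriminant `Δ` of the quadratic equation `t w² - 2(t - s + d) w - 4s = 0` for the critical
points of `Φ^▷`, divided by `4`. -/
noncomputable def rightDiscr (t s d : ℝ) : ℝ :=
  t ^ 2 + (s - d) ^ 2 + 2 * t * (s + d)

/-- The critical point `z^▷_⋆(t, s, d)`: the root of the critical equation of `Φ^▷` with the minus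
sign in front of the square root. -/
noncomputable def rightCritPt (t s d : ℝ) : ℝ :=
  (t - (s - d) - √(rightDiscr t s d)) / t

section Exponent

variable {t s d R : ℝ}

theorem hasDerivAt_rightExponent {w : ℂ} (hw : w ∈ Complex.slitPlane)
    (hw' : 2 - w ∈ Complex.slitPlane) :
    HasDerivAt (rightExponent t s d) (-(s / w) - d / (2 - w) - t / 2) w := by
  have hlog := ((Complex.hasDerivAt_log hw).const_mul (s : ℂ)).neg
  have hlog' := (((hasDerivAt_id w).const_sub 2).clog hw').const_mul (d : ℂ)
  have hlin := ((hasDerivAt_id w).const_sub 1).const_mul (t / 2 : ℂ)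
  exact ((hlog.add hlog').add hlin).congr_deriv (by simp only [id]; ring)

theorem hasDerivAt_deriv_rightExponent {w : ℂ} (hw : w ≠ 0) (hw' : 2 - w ≠ 0) :
    HasDerivAt (fun w : ℂ => -(s / w) - d / (2 - w) - t / 2)
      (s / w ^ 2 - d / (2 - w) ^ 2) w := by
  have hinv := ((hasDerivAt_const w (s : ℂ)).div (hasDerivAt_id w) hw).neg
  have hinv' := (hasDerivAt_const w (d : ℂ)).div ((hasDerivAt_id w).const_sub 2) hw'
  exact ((hinv.sub hinv').sub_const (t / 2 : ℂ)).congr_deriv (by simp only [id]; ring)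

theorem eventually_hasDerivAt_rightExponent (hR : R ∈ Ioo (0 : ℝ) 2) :
    ∀ᶠ w in 𝓝 (R : ℂ),
      HasDerivAt (rightExponent t s d) (-(s / w) - d / (2 - w) - t / 2) w := by
  have hmem : (R : ℂ) ∈ Complex.slitPlane := Or.inl (by simpa using hR.1)
  have hmem' : 2 - (R : ℂ) ∈ Complex.slitPlane := Or.inl (by simpa using hR.2)
  have hcont : ContinuousAt (fun w : ℂ => 2 - w) R := by fun_prop
  filter_upwards [Complex.isOpen_slitPlane.mem_nhds hmem,
    hcont.eventually_mem (Complex.isOpen_slitPlane.mem_nhds hmem')] with w hw hw'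
  exact hasDerivAt_rightExponent hw hw'

theorem deriv_rightExponent_circleMap_zero (hR : R ∈ Ioo (0 : ℝ) 2) :
    deriv (fun θ => rightExponent t s d (circleMap 0 R θ)) 0 =
      ((-(s / R) - d / (2 - R) - t / 2 : ℝ) : ℂ) * (R * Complex.I) := by
  have hR₀ : circleMap 0 R 0 = R := by simp [circleMap_zero]
  have hderiv := (eventually_hasDerivAt_rightExponent (t := t) (s := s) (d := d) hR).self_of_nhds
  rw [← hR₀] at hderiv
  rw [← Function.comp_def, (hderiv.comp 0 (hasDerivAt_circleMap 0 R 0)).deriv, hR₀]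
  push_cast
  rfl

theorem deriv_deriv_rightExponent_circleMap_zero (hR : R ∈ Ioo (0 : ℝ) 2) :
    deriv (deriv fun θ => rightExponent t s d (circleMap 0 R θ)) 0 =
      ((-(R ^ 2 * (s / R ^ 2 - d / (2 - R) ^ 2) +
        R * (-(s / R) - d / (2 - R) - t / 2)) : ℝ) : ℂ) := by
  have hR₀ : circleMap 0 R 0 = R := by simp [circleMap_zero]
  have hfirst := eventually_hasDerivAt_rightExponent (t := t) (s := s) (d := d) hR
  have hsecond : HasDerivAt (fun w : ℂ => -(s / w) - d / (2 - w) - t / 2)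
      (s / R ^ 2 - d / (2 - R) ^ 2) R :=
    hasDerivAt_deriv_rightExponent (mod_cast hR.1.ne') (mod_cast (sub_pos.mpr hR.2).ne')
  rw [deriv_deriv_comp_circleMap (by rwa [hR₀]) (by rwa [hR₀]), hR₀]
  push_cast
  rfl

theorem rightExponent_circleMap_re (t s d R θ : ℝ) :
    (rightExponent t s d (circleMap 0 R θ)).re =
      d * log ‖2 - circleMap 0 R θ‖ + t / 8 * ‖2 - circleMap 0 R θ‖ ^ 2 -
        (s * log R + t / 8 * R ^ 2) := by
  have hsq := norm_ofReal_sub_circleMap_sq 2 R θ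
  have hre : (circleMap 0 R θ).re = R * cos θ := by
    rw [circleMap_zero, Complex.re_ofReal_mul, Complex.exp_ofReal_mul_I_re]
  have ht : (t / 2 : ℂ) = ((t / 2 : ℝ) : ℂ) := by push_cast; rfl
  push_cast at hsq
  rw [rightExponent, ht, Complex.add_re, Complex.add_re, Complex.neg_re, Complex.re_ofReal_mul,
    Complex.re_ofReal_mul, Complex.re_ofReal_mul, Complex.log_re, Complex.log_re,
    norm_circleMap_zero, log_abs, Complex.sub_re, Complex.one_re, hre, hsq]
  ring

theorem rightExponent_circleMap_neg_re (t s d R θ : ℝ) :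
    (rightExponent t s d (circleMap 0 R (-θ))).re =
      (rightExponent t s d (circleMap 0 R θ)).re := by
  have hnorm := norm_ofReal_sub_circleMap_neg 2 R θ
  push_cast at hnorm
  rw [rightExponent_circleMap_re, rightExponent_circleMap_re, hnorm]

theorem continuous_rightExponent_circleMap_re (hR : |R| < 2) :
    Continuous fun θ => (rightExponent t s d (circleMap 0 R θ)).re := by
  have hne (θ : ℝ) : ‖2 - circleMap 0 R θ‖ ≠ 0 := by
    have := sub_abs_le_norm_sub_circleMap 2 R θ
    rw [Complex.norm_ofNat] at this
    linarith
  have hnorm : Continuous fun θ => ‖2 - circleMap 0 R θ‖ := by fun_prop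
  simp only [rightExponent_circleMap_re]
  exact ((continuous_const.mul (hnorm.log hne)).add
    (continuous_const.mul (hnorm.pow 2))).sub continuous_const

theorem strictMonoOn_rightExponent_circleMap_re (ht : 0 ≤ t) (hR : R ∈ Ioo (0 : ℝ) 2)
    (h : 0 < 4 * d + t * (2 - R) ^ 2) :
    StrictMonoOn (fun θ => (rightExponent t s d (circleMap 0 R θ)).re) (Icc 0 π) := by
  have hnorm : StrictMonoOn (fun θ => ‖2 - circleMap 0 R θ‖) (Icc 0 π) := by
    simpa using strictMonoOn_norm_ofReal_sub_circleMap (mul_pos two_pos hR.1)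
  have hmaps : MapsTo (fun θ => ‖2 - circleMap 0 R θ‖) (Icc 0 π) (Ici (2 - R)) := fun θ _ => by
    simpa [abs_of_pos hR.1] using sub_abs_le_norm_sub_circleMap 2 R θ
  have hradial := strictMonoOn_mul_log_add_mul_sq (c := d) (k := t / 8) (by positivity)
    (sub_pos.mpr hR.2) (by linarith)
  simp only [rightExponent_circleMap_re, sub_eq_add_neg _ (s * log R + t / 8 * R ^ 2)]
  exact (hradial.comp hnorm hmaps).add_const _

end Exponent

section CriticalPoint

variable {t s d : ℝ}

theorem rightDiscr_eq_sub_sq_add (t s d : ℝ) :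
    rightDiscr t s d = (t - (s - d)) ^ 2 + 4 * t * s := by
  rw [rightDiscr]; ring

theorem rightDiscr_eq_add_sq_add (t s d : ℝ) :
    rightDiscr t s d = (t + (s - d)) ^ 2 + 4 * t * d := by
  rw [rightDiscr]; ring

theorem rightDiscr_eq_mul_sub_parab (ht : 0 < t) (hx : |s - d| ≤ t) :
    rightDiscr t s d = 2 * t * (s + d - parab t (s - d)) := by
  rw [rightDiscr, parab, if_pos ⟨ht, hx⟩]
  field_simp
  ring

theorem abs_sub_le_or_pos_of_parab_lt (h : parab t (s - d) < s + d) (hs : s < 0) :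
    |s - d| ≤ t ∨ 0 < d := by
  by_contra! hc
  rw [parab, if_neg fun hp => hc.1.not_ge hp.2] at h
  rcases abs_cases (s - d) with hx | hx <;> linarith

theorem rightDiscr_pos (ht : 0 < t) (h : parab t (s - d) < s + d) (hs : s < 0) :
    0 < rightDiscr t s d := by
  rcases abs_sub_le_or_pos_of_parab_lt h hs with hx | hd
  · rw [rightDiscr_eq_mul_sub_parab ht hx]
    exact mul_pos (by positivity) (sub_pos.mpr h)
  · rw [rightDiscr_eq_add_sq_add]
    positivity

theorem mul_rightCritPt (ht : t ≠ 0) :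
    t * rightCritPt t s d = t - (s - d) - √(rightDiscr t s d) :=
  mul_div_cancel₀ _ ht

theorem rightCritPt_pos (ht : 0 < t) (h : parab t (s - d) < s + d) (hs : s < 0) :
    0 < rightCritPt t s d := by
  have hx : 0 ≤ t - (s - d) := by
    rcases abs_sub_le_or_pos_of_parab_lt h hs with hx | hd
    · linarith [le_abs_self (s - d)]
    · linarith
  have hlt : rightDiscr t s d < (t - (s - d)) ^ 2 := by
    rw [rightDiscr_eq_sub_sq_add]
    linarith [mul_neg_of_pos_of_neg ht hs]
  have hsqrt := sqrt_lt_sqrt (rightDiscr_pos ht h hs).le hlt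
  rw [sqrt_sq hx] at hsqrt
  exact div_pos (sub_pos.mpr hsqrt) ht

theorem rightCritPt_lt_two (ht : 0 < t) (h : parab t (s - d) < s + d) (hs : s < 0) :
    rightCritPt t s d < 2 := by
  have hsqrt : -(t + (s - d)) < √(rightDiscr t s d) := by
    rcases abs_sub_le_or_pos_of_parab_lt h hs with hx | hd
    · linarith [neg_abs_le (s - d), sqrt_pos.mpr (rightDiscr_pos ht h hs)]
    · refine lt_sqrt_of_sq_lt ?_
      rw [rightDiscr_eq_add_sq_add, neg_sq]
      linarith [mul_pos ht hd]
  rw [rightCritPt, div_lt_iff₀ ht]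
  linarith

theorem four_mul_eq_neg_rightCritPt_mul (ht : t ≠ 0) (hΔ : 0 ≤ rightDiscr t s d) :
    4 * s = -(rightCritPt t s d * (t * rightCritPt t s d + 2 * √(rightDiscr t s d))) := by
  have hsq := (sq_sqrt hΔ).trans (rightDiscr_eq_sub_sq_add t s d)
  have hz := mul_rightCritPt (s := s) (d := d) ht
  refine mul_left_cancel₀ ht ?_
  linear_combination -hsq +
    (t * rightCritPt t s d + t - (s - d) + √(rightDiscr t s d)) * hz

theorem four_mul_eq_two_sub_rightCritPt_mul (ht : t ≠ 0) (hΔ : 0 ≤ rightDiscr t s d) :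
    4 * d = (2 - rightCritPt t s d) *
      (2 * √(rightDiscr t s d) - t * (2 - rightCritPt t s d)) := by
  have hs := four_mul_eq_neg_rightCritPt_mul ht hΔ
  have hz := mul_rightCritPt (s := s) (d := d) ht
  linear_combination hs - 4 * hz

theorem rightCritPt_critical_equation (ht : t ≠ 0) (hΔ : 0 ≤ rightDiscr t s d)
    (hz : rightCritPt t s d ≠ 0) (hz' : 2 - rightCritPt t s d ≠ 0) :
    -(s / rightCritPt t s d) - d / (2 - rightCritPt t s d) - t / 2 = 0 := by
  have hs := four_mul_eq_neg_rightCritPt_mul ht hΔ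
  have hd := four_mul_eq_two_sub_rightCritPt_mul ht hΔ
  field_simp
  linear_combination -(2 - rightCritPt t s d) / 2 * hs - rightCritPt t s d / 2 * hd

theorem rightCritPt_sq_mul_second_deriv (ht : t ≠ 0) (hΔ : 0 ≤ rightDiscr t s d)
    (hz : rightCritPt t s d ≠ 0) (hz' : 2 - rightCritPt t s d ≠ 0) :
    rightCritPt t s d ^ 2 * (s / rightCritPt t s d ^ 2 - d / (2 - rightCritPt t s d) ^ 2) =
      -(rightCritPt t s d * √(rightDiscr t s d) / (2 - rightCritPt t s d)) := by
  have hs := four_mul_eq_neg_rightCritPt_mul ht hΔ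
  have hd := four_mul_eq_two_sub_rightCritPt_mul ht hΔ
  field_simp
  linear_combination (2 - rightCritPt t s d) ^ 2 / 4 * hs - rightCritPt t s d ^ 2 / 4 * hd

theorem deriv_rightExponent_circleMap_rightCritPt (ht : t ≠ 0) (hΔ : 0 ≤ rightDiscr t s d)
    (hz : rightCritPt t s d ∈ Ioo (0 : ℝ) 2) :
    deriv (fun θ => rightExponent t s d (circleMap 0 (rightCritPt t s d) θ)) 0 = 0 := by
  rw [deriv_rightExponent_circleMap_zero hz,
    rightCritPt_critical_equation ht hΔ hz.1.ne' (sub_pos.mpr hz.2).ne', Complex.ofReal_zero,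
    zero_mul]

theorem deriv_deriv_rightExponent_circleMap_rightCritPt (ht : t ≠ 0)
    (hΔ : 0 ≤ rightDiscr t s d) (hz : rightCritPt t s d ∈ Ioo (0 : ℝ) 2) :
    deriv (deriv fun θ => rightExponent t s d (circleMap 0 (rightCritPt t s d) θ)) 0 =
      ((rightCritPt t s d * √(rightDiscr t s d) / (2 - rightCritPt t s d) : ℝ) : ℂ) := by
  have hz' : 2 - rightCritPt t s d ≠ 0 := (sub_pos.mpr hz.2).ne'
  rw [deriv_deriv_rightExponent_circleMap_zero hz,
    rightCritPt_critical_equation ht hΔ hz.1.ne' hz',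
    rightCritPt_sq_mul_second_deriv ht hΔ hz.1.ne' hz', mul_zero, add_zero, neg_neg]

end CriticalPoint

theorem steepest_descent_right_general (t s d : ℝ) (ht : 0 < t)
    (h1 : parab t (s - d) < s + d) (hs : s < 0) :
    let Δ : ℝ := rightDiscr t s d
    let z : ℝ := rightCritPt t s d
    let Φ : ℝ → ℂ := fun θ => rightExponent t s d (circleMap 0 z θ)
    0 < Δ ∧ z ∈ Set.Ioo (0 : ℝ) 2 ∧
      deriv Φ 0 = 0 ∧
      ((deriv (deriv Φ) 0).im = 0 ∧ 0 < (deriv (deriv Φ) 0).re) ∧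
      ContinuousOn (fun θ => (Φ θ).re) (Set.Icc (-π) π) ∧
      (∀ θ, (Φ (-θ)).re = (Φ θ).re) ∧
      StrictMonoOn (fun θ => (Φ θ).re) (Set.Icc 0 π) := by
  intro Δ z Φ
  have hΔ : 0 < Δ := rightDiscr_pos ht h1 hs
  have hz : z ∈ Ioo (0 : ℝ) 2 := ⟨rightCritPt_pos ht h1 hs, rightCritPt_lt_two ht h1 hs⟩
  have hz_abs : |z| < 2 := by rw [abs_of_pos hz.1]; exact hz.2
  have hz_two : 0 < 2 - z := sub_pos.mpr hz.2
  have hΦ₂ : deriv (deriv Φ) 0 = ((z * √Δ / (2 - z) : ℝ) : ℂ) :=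
    deriv_deriv_rightExponent_circleMap_rightCritPt ht.ne' hΔ.le hz
  have hd : 4 * d + t * (2 - z) ^ 2 = 2 * √Δ * (2 - z) := by
    rw [four_mul_eq_two_sub_rightCritPt_mul ht.ne' hΔ.le]; ring
  refine ⟨hΔ, hz, deriv_rightExponent_circleMap_rightCritPt ht.ne' hΔ.le hz, ?_,
    (continuous_rightExponent_circleMap_re hz_abs).continuousOn,
    rightExponent_circleMap_neg_re t s d z,
    strictMonoOn_rightExponent_circleMap_re ht.le hz (hd ▸ by positivity)⟩
  rw [hΦ₂, Complex.ofReal_im, Complex.ofReal_re]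
  exact ⟨rfl, div_pos (mul_pos hz.1 (sqrt_pos.mpr hΔ)) hz_two⟩

/-- Lemma C.1 (l.steep), case `Φ = Φ^▷`: with `x = s − d`, `a = s + d` and
`p(t,x) < a < −|x|`, the discriminant `Δ = t² + x² + 2ta` is positive, the critical point
`z⋆ = (t − x − √Δ)/t` lies in `(0,2)`, and the exponent
`Φ(θ) = −s·Log(z⋆e^{iθ}) + d·Log(2 − z⋆e^{iθ}) + (t/2)(1 − z⋆e^{iθ})` has a critical point
at `θ = 0` with positive second derivative, while `Re Φ` is even, extends continuously to
`[−π, π]`, and is strictly increasing on `[0, π]`. -/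
theorem steepest_descent_right (t s d : ℝ) (ht : 0 < t)
    (h1 : parab t (s - d) < s + d) (h2 : s + d < -|s - d|) :
    let Δ : ℝ := t ^ 2 + (s - d) ^ 2 + 2 * t * (s + d)
    let z : ℝ := (t - (s - d) - Real.sqrt Δ) / t
    let Φ : ℝ → ℂ := fun θ =>
      -((s : ℂ) * Complex.log ((z : ℂ) * Complex.exp (θ * Complex.I))) +
        (d : ℂ) * Complex.log (2 - (z : ℂ) * Complex.exp (θ * Complex.I)) +
        (t / 2 : ℂ) * (1 - (z : ℂ) * Complex.exp (θ * Complex.I))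
    0 < Δ ∧ z ∈ Set.Ioo (0 : ℝ) 2 ∧
      deriv Φ 0 = 0 ∧
      ((deriv (deriv Φ) 0).im = 0 ∧ 0 < (deriv (deriv Φ) 0).re) ∧
      ContinuousOn (fun θ => (Φ θ).re) (Set.Icc (-π) π) ∧
      (∀ θ, (Φ (-θ)).re = (Φ θ).re) ∧
      StrictMonoOn (fun θ => (Φ θ).re) (Set.Icc 0 π) := by
  have hs : s < 0 := by linarith [le_abs_self (s - d)]
  simpa only [rightExponent, rightCritPt, rightDiscr, circleMap_zero] using
    steepest_descent_right_general t s d ht h1 hs
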